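/- If the Kervaire conjecture holds for every nontrivial finitely presented group (i.e., for every nontrivial finitely presented group G, no single element of G * ℤ normally generates G * ℤ), then it holds for every nontrivial group: for every nontrivial group G, the free product G * ℤ is not of weight one. (Reduction of González-Acuña and Ramírez used by the paper.) -/

import Mathlib

/-!
Suppose `w` normally generates `G * N`, where `N` is finitely generated. Killing `N` by `w` uses
only finitely many relations of `G`, so `w` lifts to some `W : A * N` with `A` finitely presented,
whose normal closure still contains `N`, and whose image `g` in `A` is nontrivial because its image
in `G` is. It suffices to map `A` to a finitely presented group in which `g` survives and is a
normal generator, for then the image of `W` normally generates.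

To this end `A` is made to act faithfully on a countable set together with two finite alternating
groups, so that everything collapses once `g = 1`: `g` conjugates an element of the first
alternating group to a different one, the two alternating groups share a nontrivial element, and
they conjugate `A` onto two copies of itself whose pointwise product is `A` again, so that
`a = a * a` once the alternating groups are trivial. Since the free product of `A` and the two
alternating groups is finitely presented, finitely many of the relations that hold in this action
already make `g` a normal generator.
-/

open Monoid

/-- A group is finitely presented if it is isomorphic to a quotient of a finitely
generated free group by the normal closure of finitely many relators. -/
def IsFinitelyPresentedGroup (G : Type*) [Group G] : Prop :=
  ∃ (n : ℕ) (rels : Finset (FreeGroup (Fin n))),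
    Nonempty ((FreeGroup (Fin n) ⧸
      Subgroup.normalClosure (rels : Set (FreeGroup (Fin n)))) ≃* G)

section Finiteness

variable {G : Type*} [Group G]

theorem isFinitelyPresentedGroup_of_isFinitelyPresented [Group.IsFinitelyPresented G] :
    IsFinitelyPresentedGroup G := by
  obtain ⟨n, rels, hrels, ⟨e⟩⟩ := Group.IsFinitelyPresented.exists_mulEquiv_presentedGroup (G := G)
  lift rels to Finset (FreeGroup (Fin n)) using hrels
  exact ⟨n, rels, ⟨e.symm⟩⟩

theorem fg_of_isFinitelyPresented [hG : Group.IsFinitelyPresented G] : Group.FG G := by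
  obtain ⟨n, φ, hφ, -⟩ := hG.out
  exact Group.fg_iff_exists_freeGroup_hom_surjective_finite.2 ⟨Fin n, inferInstance, φ, hφ⟩

theorem countable_of_fg [Group.FG G] : Countable G := by
  obtain ⟨α, _, φ, hφ⟩ := Group.fg_iff_exists_freeGroup_hom_surjective_finite.1 ‹Group.FG G›
  exact hφ.countable

theorem exists_finite_subset_mem_closure {A : Set G} {x : G} (hx : x ∈ Subgroup.closure A) :
    ∃ S ⊆ A, S.Finite ∧ x ∈ Subgroup.closure S := by
  induction hx using Subgroup.closure_induction with
  | mem x hx =>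
    exact ⟨{x}, by simpa using hx, Set.finite_singleton x, Subgroup.subset_closure rfl⟩
  | one => exact ⟨∅, Set.empty_subset A, Set.finite_empty, one_mem _⟩
  | mul x y _ _ hx hy =>
    obtain ⟨S, hSA, hS, hxS⟩ := hx
    obtain ⟨T, hTA, hT, hyT⟩ := hy
    exact ⟨S ∪ T, Set.union_subset hSA hTA, hS.union hT,
      mul_mem (Subgroup.closure_mono Set.subset_union_left hxS)
        (Subgroup.closure_mono Set.subset_union_right hyT)⟩
  | inv x _ hx =>
    obtain ⟨S, hSA, hS, hxS⟩ := hx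
    exact ⟨S, hSA, hS, inv_mem hxS⟩

theorem exists_finite_subset_subset_closure {A X : Set G} (hX : X.Finite)
    (hXA : X ⊆ Subgroup.closure A) :
    ∃ S ⊆ A, S.Finite ∧ X ⊆ Subgroup.closure S := by
  choose! S hSA hS hxS using fun x hx ↦ exists_finite_subset_mem_closure (hXA (a := x) hx)
  exact ⟨⋃ x ∈ X, S x, Set.iUnion₂_subset hSA, hX.biUnion hS, fun x hx ↦
    Subgroup.closure_mono (Set.subset_biUnion_of_mem hx) (hxS x hx)⟩

theorem exists_finite_subset_subset_normalClosure {A X : Set G} (hX : X.Finite)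
    (hXA : X ⊆ Subgroup.normalClosure A) :
    ∃ S ⊆ A, S.Finite ∧ X ⊆ Subgroup.normalClosure S := by
  obtain ⟨C, hCA, hC, hXC⟩ := exists_finite_subset_subset_closure hX hXA
  choose! a haA haC using fun c hc ↦ Group.mem_conjugatesOfSet_iff.1 (hCA (a := c) hc)
  refine ⟨a '' C, Set.image_subset_iff.2 haA, hC.image a,
    hXC.trans (Subgroup.closure_le _ |>.2 fun c hc ↦ ?_)⟩
  exact Subgroup.subset_closure
    (Group.mem_conjugatesOfSet_iff.2 ⟨a c, Set.mem_image_of_mem a hc, haC c hc⟩)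

theorem exists_finite_subset_range_le_normalClosure {N : Type*} [Group N] [Group.FG N]
    {A : Set G} (f : N →* G) (h : f.range ≤ Subgroup.normalClosure A) :
    ∃ S ⊆ A, S.Finite ∧ f.range ≤ Subgroup.normalClosure S := by
  obtain ⟨Y, hY, hYfin⟩ := Group.fg_iff.1 ‹Group.FG N›
  have range_le_iff (K : Subgroup G) : f.range ≤ K ↔ f '' Y ⊆ K := by
    rw [MonoidHom.range_eq_map, ← hY, MonoidHom.map_closure, Subgroup.closure_le]
  simp only [range_le_iff] at h ⊢
  exact exists_finite_subset_subset_normalClosure (hYfin.image f) h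

theorem exists_isFinitelyNormallyGenerated_le_normalClosure_mk_eq_top [Group.FG G]
    (L : Subgroup G) [L.Normal] {g : G} (hg : Subgroup.normalClosure (insert g (L : Set G)) = ⊤) :
    ∃ (K : Subgroup G) (_ : K.Normal), K ≤ L ∧ K.IsFinitelyNormallyGenerated ∧
      Subgroup.normalClosure {(g : G ⧸ K)} = ⊤ := by
  obtain ⟨S, hSL, hS, htop⟩ := exists_finite_subset_range_le_normalClosure (.id G) (hg ▸ le_top)
  rw [MonoidHom.range_eq_top.2 Function.surjective_id, top_le_iff] at htop
  have hKL : Subgroup.normalClosure (S \ {g}) ≤ L :=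
    Subgroup.normalClosure_le_normal (Set.sdiff_singleton_subset_iff.2 hSL)
  refine ⟨_, inferInstance, hKL, ⟨_, hS.sdiff, rfl⟩, top_unique ?_⟩
  rw [← Subgroup.map_top_of_surjective _ (QuotientGroup.mk'_surjective _), ← htop,
    Subgroup.map_le_iff_le_comap]
  refine Subgroup.normalClosure_le_normal fun x hx ↦ ?_
  obtain rfl | hxg := eq_or_ne x g
  · exact Subgroup.subset_normalClosure rfl
  · have hx1 : (x : G ⧸ Subgroup.normalClosure (S \ {g})) = 1 :=
      (QuotientGroup.eq_one_iff x).2 (Subgroup.subset_normalClosure ⟨hx, hxg⟩)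
    rw [SetLike.mem_coe, Subgroup.mem_comap, QuotientGroup.mk'_apply, hx1]
    exact one_mem _

end Finiteness

section FreeProduct

variable {G G' N : Type*} [Group G] [Group G'] [Group N]

theorem coprod_map_id_surjective {f : G →* G'} (hf : Function.Surjective f) :
    Function.Surjective (Coprod.map f (.id N)) := by
  rw [← MonoidHom.range_eq_top, eq_top_iff, ← Coprod.range_inl_sup_range_inr, sup_le_iff]
  constructor
  · rintro _ ⟨x, rfl⟩
    obtain ⟨y, rfl⟩ := hf x
    exact ⟨Coprod.inl y, Coprod.map_apply_inl f (.id N) y⟩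
  · rintro _ ⟨x, rfl⟩
    exact ⟨Coprod.inr x, Coprod.map_apply_inr f (.id N) x⟩

theorem coprod_fst_map_id (f : G →* G') (w : Coprod G N) :
    Coprod.fst (Coprod.map f (.id N) w) = f (Coprod.fst w) := by
  have : Coprod.fst.comp (Coprod.map f (.id N)) = f.comp Coprod.fst := by ext <;> simp
  exact DFunLike.congr_fun this w

theorem ker_coprod_map_id {f : G →* G'} (hf : Function.Surjective f) :
    (Coprod.map f (.id N)).ker = Subgroup.normalClosure (Coprod.inl '' f.ker) := by
  apply le_antisymm
  · set K : Subgroup (Coprod G N) := Subgroup.normalClosure (Coprod.inl '' f.ker)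
    have hfK : f.ker ≤ ((QuotientGroup.mk' K).comp Coprod.inl).ker := fun x hx ↦
      (QuotientGroup.eq_one_iff _).2 (Subgroup.subset_normalClosure (Set.mem_image_of_mem _ hx))
    set extension : Coprod G' N →* Coprod G N ⧸ K :=
      Coprod.lift (f.liftOfSurjective hf ⟨_, hfK⟩) ((QuotientGroup.mk' K).comp Coprod.inr)
    have h : extension.comp (Coprod.map f (.id N)) = QuotientGroup.mk' K := by
      refine Coprod.hom_ext ?_ ?_
      · rw [MonoidHom.comp_assoc, Coprod.map_comp_inl, ← MonoidHom.comp_assoc, Coprod.lift_comp_inl]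
        exact f.liftOfRightInverse_comp _ _ ⟨_, hfK⟩
      · rw [MonoidHom.comp_assoc, Coprod.map_comp_inr, MonoidHom.comp_id, Coprod.lift_comp_inr]
    intro x hx
    rw [← QuotientGroup.ker_mk' K, ← h, MonoidHom.mem_ker, MonoidHom.comp_apply,
      MonoidHom.mem_ker.1 hx, map_one]
  · refine Subgroup.normalClosure_le_normal ?_
    rintro _ ⟨x, hx, rfl⟩
    rw [SetLike.mem_coe, MonoidHom.mem_ker, Coprod.map_apply_inl, MonoidHom.mem_ker.1 hx, map_one]

theorem range_inr_le_normalClosure_image {A : Set (Coprod G N)} (f : G →* G')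
    (hA : Coprod.inr.range ≤ Subgroup.normalClosure A) :
    Coprod.inr.range ≤ Subgroup.normalClosure (Coprod.map f (.id N) '' A) := by
  refine le_trans ?_ ((Subgroup.map_mono hA).trans (Subgroup.map_normalClosure_le _ _))
  rw [MonoidHom.map_range, Coprod.map_comp_inr, MonoidHom.comp_id]

theorem normalClosure_singleton_eq_top_of_fst {w : Coprod G N}
    (hN : Coprod.inr.range ≤ Subgroup.normalClosure {w})
    (hG : Subgroup.normalClosure {Coprod.fst w} = ⊤) :
    Subgroup.normalClosure {w} = ⊤ := by
  let q := QuotientGroup.mk' (Subgroup.normalClosure {w})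
  have hq_inr : q.comp Coprod.inr = 1 := by
    ext x
    exact (QuotientGroup.eq_one_iff _).2 (hN ⟨x, rfl⟩)
  have hq : q = (q.comp Coprod.inl).comp Coprod.fst :=
    Coprod.hom_ext (by ext; simp) (by rw [hq_inr]; ext; simp)
  have hqw : q w = 1 := (QuotientGroup.eq_one_iff w).2 (Subgroup.subset_normalClosure rfl)
  have hq_inl : (q.comp Coprod.inl).ker = ⊤ := by
    rw [eq_top_iff, ← hG]
    refine Subgroup.normalClosure_le_normal (Set.singleton_subset_iff.2 ?_)
    exact (DFunLike.congr_fun hq w).symm.trans hqw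
  rw [← QuotientGroup.ker_mk' (Subgroup.normalClosure {w}), ← top_le_iff,
    ← Coprod.range_inl_sup_range_inr, sup_le_iff, MonoidHom.range_le_ker_iff,
    MonoidHom.range_le_ker_iff]
  exact ⟨(MonoidHom.ker_eq_top_iff).1 hq_inl, hq_inr⟩

theorem coprod_fst_ne_one [Nontrivial G] {w : Coprod G N}
    (hw : Subgroup.normalClosure {w} = ⊤) : Coprod.fst w ≠ 1 := by
  intro hfst
  have hker : (Coprod.fst : Coprod G N →* G).ker = ⊤ :=
    top_unique (hw ▸ Subgroup.normalClosure_le_normal (Set.singleton_subset_iff.2 hfst))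
  obtain ⟨x, hx⟩ := exists_ne (1 : G)
  have hinl : Coprod.inl x ∈ (Coprod.fst : Coprod G N →* G).ker := hker ▸ Subgroup.mem_top _
  exact hx (by simpa using hinl)

theorem exists_finite_relators_range_inr_le [Group.FG N] {p : G →* G'}
    (hp : Function.Surjective p) {w : Coprod G N}
    (hw : Coprod.inr.range ≤ Subgroup.normalClosure {Coprod.map p (.id N) w}) :
    ∃ R : Set G, R.Finite ∧ R ⊆ p.ker ∧
      Coprod.inr.range ≤ Subgroup.normalClosure (insert w (Coprod.inl '' R)) := by
  have hle : Coprod.inr.range ≤ Subgroup.normalClosure (insert w (Coprod.inl '' p.ker)) := by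
    rw [Set.insert_eq, Subgroup.normalClosure_union, ← ker_coprod_map_id hp,
      ← Subgroup.comap_map_eq, Subgroup.map_normalClosure _ _ (coprod_map_id_surjective hp),
      Set.image_singleton, ← Subgroup.map_le_iff_le_comap, MonoidHom.map_range,
      Coprod.map_comp_inr, MonoidHom.comp_id]
    exact hw
  obtain ⟨S, hS, hSfin, hleS⟩ := exists_finite_subset_range_le_normalClosure _ hle
  refine ⟨Coprod.inl ⁻¹' S ∩ p.ker, (hSfin.preimage Coprod.inl_injective.injOn).inter_of_left _,
    Set.inter_subset_right, hleS.trans (Subgroup.normalClosure_mono fun x hx ↦ ?_)⟩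
  obtain rfl | ⟨r, hr, rfl⟩ := hS hx
  · exact Set.mem_insert _ _
  · exact Set.mem_insert_of_mem _ ⟨r, ⟨hx, hr⟩, rfl⟩

end FreeProduct

section Approximation

theorem exists_finite_freeGroup_retraction {α : Type*} {R : Set (FreeGroup α)} (hR : R.Finite) :
    ∃ (X : Set α) (r : FreeGroup α →* FreeGroup X), X.Finite ∧
      ∀ x ∈ R, FreeGroup.map (↑) (r x) = x := by
  classical
  obtain ⟨S, hS, hSfin, hRS⟩ := exists_finite_subset_subset_closure (A := Set.range FreeGroup.of) hR
    (by simp [FreeGroup.closure_range_of])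
  obtain ⟨X, rfl⟩ := Set.subset_range_iff_exists_image_eq.1 hS
  have hX : X.Finite := hSfin.of_finite_image FreeGroup.of_injective.injOn
  let r : FreeGroup α →* FreeGroup X :=
    FreeGroup.lift fun a ↦ if h : a ∈ X then FreeGroup.of ⟨a, h⟩ else 1
  refine ⟨X, r, hX, fun x hx ↦ ?_⟩
  refine MonoidHom.eqOn_closure (f := (FreeGroup.map (↑)).comp r) (g := .id _) ?_ (hRS hx)
  rintro _ ⟨a, ha, rfl⟩
  simp [r, ha]

theorem exists_isFinitelyPresented_range_inr_le {G : Type u} {N : Type*} [Group G] [Group N]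
    [Group.FG N] {w : Coprod G N} (hw : Coprod.inr.range ≤ Subgroup.normalClosure {w}) :
    ∃ (A : Type u) (_ : Group A) (ψ : A →* G) (W : Coprod A N), Group.IsFinitelyPresented A ∧
      ψ (Coprod.fst W) = Coprod.fst w ∧ Coprod.inr.range ≤ Subgroup.normalClosure {W} := by
  obtain ⟨V, rfl⟩ := coprod_map_id_surjective (N := N) FreeGroup.prod_surjective w
  obtain ⟨R, hR, hRp, hV⟩ := exists_finite_relators_range_inr_le FreeGroup.prod_surjective hw
  obtain ⟨X, r, hX, hr⟩ := exists_finite_freeGroup_retraction (hR.insert (Coprod.fst V))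
  have hprod {x} (hx : x ∈ insert (Coprod.fst V) R) :
      FreeGroup.lift (↑) (r x) = FreeGroup.prod x := by
    rw [FreeGroup.lift_eq_prod_map, hr x hx]
  have := hX.to_subtype
  have := (hR.image r).to_subtype
  let ρ : FreeGroup G →* PresentedGroup (r '' R) := (PresentedGroup.mk _).comp r
  have hρ {x} (hx : x ∈ R) : ρ x = 1 :=
    PresentedGroup.one_of_mem (Set.mem_image_of_mem r hx)
  refine ⟨PresentedGroup (r '' R), inferInstance, PresentedGroup.toGroup (f := (↑)) ?_,
    Coprod.map ρ (.id N) V, inferInstance, ?_, ?_⟩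
  · rintro _ ⟨x, hx, rfl⟩
    rw [hprod (Set.mem_insert_of_mem _ hx)]
    exact hRp hx
  · rw [coprod_fst_map_id, coprod_fst_map_id]
    exact hprod (Set.mem_insert _ _)
  · refine (range_inr_le_normalClosure_image ρ hV).trans (Subgroup.normalClosure_le_normal ?_)
    rintro _ ⟨_, rfl | ⟨x, hx, rfl⟩, rfl⟩
    · exact Subgroup.subset_normalClosure rfl
    · rw [Coprod.map_apply_inl, hρ hx, map_one]
      exact one_mem _

end Approximation

section Collapse

variable {A : Type u} {S T : Type v} {H : Type*} [Group A] [Group S] [Group T] [Group H]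

theorem eq_one_of_isSimpleGroup [IsSimpleGroup S] (f : S →* H) {s : S} (hs : s ≠ 1)
    (hfs : f s = 1) : f = 1 := by
  rw [← MonoidHom.ker_eq_top_iff]
  exact f.normal_ker.eq_bot_or_eq_top.resolve_left fun h ↦
    hs ((Subgroup.eq_bot_iff_forall _).1 h s hfs)

/-- The relations between images of `A`, `S` and `T` in a group that force all three images to be
trivial as soon as the image of `g` is, when `S` and `T` are simple; see `CollapsesAt.eq_one`. -/
structure CollapsesAt (g : A) (ρ : A →* H) (σ : S →* H) (τ : T →* H) : Prop where
  exists_conj : ∃ v v', v ≠ v' ∧ MulAut.conj (ρ g) (σ v) = σ v'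
  exists_overlap : ∃ s t, t ≠ 1 ∧ σ s = τ t
  exists_doubling : ∃ s t t', ∀ a,
    ρ a = MulAut.conj (τ t * σ s) (ρ a) * MulAut.conj (τ t' * σ s) (ρ a)

namespace CollapsesAt

variable {g : A} {ρ : A →* H} {σ : S →* H} {τ : T →* H}

theorem of_ker_le {Γ Q : Type*} [Group Γ] [Group Q] {ρ : A →* Γ} {σ : S →* Γ} {τ : T →* Γ}
    {Φ : Γ →* H} (h : CollapsesAt g (Φ.comp ρ) (Φ.comp σ) (Φ.comp τ)) {f : Γ →* Q}
    (hf : Φ.ker ≤ f.ker) : CollapsesAt g (f.comp ρ) (f.comp σ) (f.comp τ) := by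
  have transfer {x y : Γ} (hxy : Φ x = Φ y) : f x = f y := by
    rw [← div_eq_one, ← map_div] at hxy ⊢
    exact hf hxy
  obtain ⟨⟨v, v', hv, hconj⟩, ⟨s, t, ht, hst⟩, ⟨u, t₁, t₂, hdouble⟩⟩ := h
  refine ⟨⟨v, v', hv, ?_⟩, ⟨s, t, ht, transfer hst⟩, ⟨u, t₁, t₂, fun a ↦ ?_⟩⟩
  · simpa using transfer (x := MulAut.conj (ρ g) (σ v)) (y := σ v') (by simpa using hconj)
  · simpa using transfer (x := ρ a)
      (y := MulAut.conj (τ t₁ * σ u) (ρ a) * MulAut.conj (τ t₂ * σ u) (ρ a))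
      (by simpa using hdouble a)

theorem eq_one [IsSimpleGroup S] [IsSimpleGroup T] (h : CollapsesAt g ρ σ τ) (hg : ρ g = 1) :
    ρ = 1 ∧ σ = 1 ∧ τ = 1 := by
  obtain ⟨⟨v, v', hv, hconj⟩, ⟨s, t, ht, hst⟩, ⟨u, t₁, t₂, hdouble⟩⟩ := h
  have hσ : σ = 1 := by
    refine eq_one_of_isSimpleGroup σ (div_ne_one.2 hv) ?_
    rw [map_div, ← hconj, hg, map_one, MulAut.one_apply, div_self']
  have hτ : τ = 1 := eq_one_of_isSimpleGroup τ ht (by rw [← hst, hσ, MonoidHom.one_apply])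
  subst hσ hτ
  exact ⟨MonoidHom.ext fun a ↦ by simpa using hdouble a, rfl, rfl⟩

theorem exists_isFinitelyPresented_normalClosure_eq_top [Group.IsFinitelyPresented A] [Finite S]
    [Finite T] [IsSimpleGroup S] [IsSimpleGroup T] (h : CollapsesAt g ρ σ τ) (hg : ρ g ≠ 1) :
    ∃ (Q : Type (max u v)) (_ : Group Q) (φ : A →* Q), Group.IsFinitelyPresented Q ∧ φ g ≠ 1 ∧
      Subgroup.normalClosure {φ g} = ⊤ := by
  let Γ := Coprod A (Coprod S T)
  let Φ : Γ →* H := Coprod.lift ρ (Coprod.lift σ τ)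
  have hΦ : CollapsesAt g (Φ.comp Coprod.inl) (Φ.comp (Coprod.inr.comp Coprod.inl))
      (Φ.comp (Coprod.inr.comp Coprod.inr)) := by
    rwa [← MonoidHom.comp_assoc, ← MonoidHom.comp_assoc, Coprod.lift_comp_inl,
      Coprod.lift_comp_inr, Coprod.lift_comp_inl, Coprod.lift_comp_inr]
  let L := Subgroup.normalClosure (insert (Coprod.inl g) (Φ.ker : Set Γ))
  have hL : L = ⊤ := by
    have hΦL : Φ.ker ≤ (QuotientGroup.mk' L).ker := by
      rw [QuotientGroup.ker_mk']
      exact (Set.subset_insert _ _).trans Subgroup.subset_normalClosure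
    obtain ⟨hA, hS, hT⟩ := (hΦ.of_ker_le hΦL).eq_one
      ((QuotientGroup.eq_one_iff _).2 (Subgroup.subset_normalClosure (Set.mem_insert _ _)))
    rw [← QuotientGroup.ker_mk' L, MonoidHom.ker_eq_top_iff]
    exact Coprod.hom_ext hA (Coprod.hom_ext hS hT)
  have := fg_of_isFinitelyPresented (G := Γ)
  obtain ⟨K, _, hKΦ, hK, htop⟩ :=
    exists_isFinitelyNormallyGenerated_le_normalClosure_mk_eq_top Φ.ker hL
  refine ⟨Γ ⧸ K, inferInstance, (QuotientGroup.mk' K).comp Coprod.inl, .quotient K hK, ?_, htop⟩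
  intro hgK
  have hgΦ : Φ (Coprod.inl g) = 1 := hKΦ ((QuotientGroup.eq_one_iff _).1 hgK)
  exact hg (by rwa [Coprod.lift_apply_inl] at hgΦ)

end CollapsesAt

end Collapse

section BlockPermutations

open Equiv

variable {I B C D E W Y Z : Type*}

/-- The action of permutations of `I` on a set `Y` decomposed by `e` into blocks indexed by `I`,
each a copy of `Z`, moving the blocks rigidly. For `e = Equiv.refl _` this is the action on the
first factor of a product. -/
def blockPerm (e : I × Z ≃ Y) : Perm I →* Perm Y where
  toFun π := e.permCongr (prodCongr π (Equiv.refl Z))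
  map_one' := by ext; simp
  map_mul' π π' :=
    e.permCongr_mul (prodCongr π (Equiv.refl Z)) (prodCongr π' (Equiv.refl Z))

@[simp]
theorem blockPerm_apply (e : I × Z ≃ Y) (π : Perm I) (i : I) (z : Z) :
    blockPerm e π (e (i, z)) = e (π i, z) := by
  change e.permCongr (prodCongr π (Equiv.refl Z)) (e (i, z)) = _
  simp

@[simp]
theorem blockPerm_refl_apply (π : Perm I) (y : I × Z) :
    blockPerm (Equiv.refl (I × Z)) π y = (π y.1, y.2) := rfl

theorem blockPerm_injective [Nonempty Z] (e : I × Z ≃ Y) : Function.Injective (blockPerm e) := by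
  intro π π' h
  ext i
  obtain ⟨z⟩ := ‹Nonempty Z›
  have := DFunLike.congr_fun h (e (i, z))
  simpa only [blockPerm_apply, e.apply_eq_iff_eq, Prod.mk.injEq, and_true] using this

/-- The block of index `b` in a set `C` decomposed by `e` into copies of `D` indexed by `B`. -/
def block (e : B × D ≃ C) (b : B) : Set C := Set.range fun d ↦ e (b, d)

@[simp]
theorem mem_block (e : B × D ≃ C) {b : B} {c : C} : c ∈ block e b ↔ (e.symm c).1 = b := by
  obtain ⟨⟨b', d⟩, rfl⟩ := e.surjective c
  simp [block, eq_comm]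

theorem disjoint_block (e : B × D ≃ C) {b b' : B} (hb : b ≠ b') :
    Disjoint (block e b) (block e b') := by
  refine Set.disjoint_left.2 fun c hc hc' ↦ hb ?_
  rw [← (mem_block e).1 hc, (mem_block e).1 hc']

theorem blockPerm_image_block (e : B × D ≃ C) (π : Perm B) (b : B) :
    blockPerm e π '' block e b = block e (π b) := by
  simp only [block, ← Set.range_comp, Function.comp_def, blockPerm_apply]

open Classical in
/-- The action of permutations of `W` on those fibers of `C × W` that lie over the points of `P`,
all other points being fixed. -/
noncomputable def fiberwise (P : Set C) : Perm W →* Perm (C × W) where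
  toFun π := prodCongrRight fun c ↦ if c ∈ P then π else 1
  map_one' := by ext x <;> simp
  map_mul' π π' := by
    ext ⟨c, w⟩ <;> by_cases hc : c ∈ P <;> simp [hc]

theorem fiberwise_of_mem {P : Set C} {c : C} (hc : c ∈ P) (π : Perm W) (w : W) :
    fiberwise P π (c, w) = (c, π w) := by
  simp [fiberwise, hc]

theorem fiberwise_of_notMem {P : Set C} {c : C} (hc : c ∉ P) (π : Perm W) (w : W) :
    fiberwise P π (c, w) = (c, w) := by
  simp [fiberwise, hc]

theorem fiberwise_injective {P : Set C} (hP : P.Nonempty) :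
    Function.Injective (fiberwise P : Perm W →* Perm (C × W)) := by
  intro π π' h
  obtain ⟨c, hc⟩ := hP
  ext w
  simpa [fiberwise_of_mem hc] using DFunLike.congr_fun h (c, w)

theorem fiberwise_union {P Q : Set C} (hPQ : Disjoint P Q) (π : Perm W) :
    fiberwise (P ∪ Q) π = fiberwise P π * fiberwise Q π := by
  ext1 ⟨c, w⟩
  by_cases hP : c ∈ P
  · have hQ : c ∉ Q := Set.disjoint_left.1 hPQ hP
    simp [fiberwise_of_mem, fiberwise_of_notMem, hP, hQ]
  · by_cases hQ : c ∈ Q <;> simp [fiberwise_of_mem, fiberwise_of_notMem, hP, hQ]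

theorem conj_fiberwise (χ : Perm C) (P : Set C) (π : Perm W) :
    MulAut.conj (blockPerm (Equiv.refl (C × W)) χ) (fiberwise P π) = fiberwise (χ '' P) π := by
  rw [MulAut.conj_apply, mul_inv_eq_iff_eq_mul]
  ext1 ⟨c, w⟩
  by_cases hc : c ∈ P
  · simp [fiberwise_of_mem, hc]
  · simp [fiberwise_of_notMem, hc]

/-- The decomposition of a product `C × W` into blocks indexed by `B × E`, induced by decompositions
of `C` and `W` into blocks indexed by `B` and by `E`. -/
def blockProd (e : B × D ≃ C) (f : E × Z ≃ W) : (B × E) × (D × Z) ≃ C × W :=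
  (prodProdProdComm B E D Z).trans (e.prodCongr f)

theorem blockPerm_blockProd_apply (e : B × D ≃ C) (f : E × Z ≃ W) (π : Perm (B × E)) (b : B) (d : D)
    (x : E) (z : Z) : blockPerm (blockProd e f) π (e (b, d), f (x, z)) =
      (e ((π (b, x)).1, d), f ((π (b, x)).2, z)) :=
  blockPerm_apply (blockProd e f) π (b, x) (d, z)

theorem perm_prod_ext (e : B × D ≃ C) (f : E × Z ≃ W) {π π' : Perm (C × W)}
    (h : ∀ b d x z, π (e (b, d), f (x, z)) = π' (e (b, d), f (x, z))) : π = π' := by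
  ext1 ⟨c, w⟩
  simpa using h (e.symm c).1 (e.symm c).2 (f.symm w).1 (f.symm w).2

theorem blockPerm_blockProd_fiberwise (e : B × D ≃ C) (f : E × Z ≃ W) (b : B) (π : Perm E) :
    blockPerm (blockProd e f) (fiberwise {b} π) = fiberwise (block e b) (blockPerm f π) := by
  refine perm_prod_ext e f fun b' d x z ↦ ?_
  rw [blockPerm_blockProd_apply]
  obtain rfl | hb := eq_or_ne b' b
  · rw [fiberwise_of_mem (Set.mem_singleton b'), fiberwise_of_mem ((mem_block e).2 (by simp)),
      blockPerm_apply]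
  · rw [fiberwise_of_notMem (Set.mem_singleton_iff.not.2 hb),
      fiberwise_of_notMem ((mem_block e).not.2 (by simpa using hb))]

theorem blockPerm_blockProd_blockPerm (e : B × D ≃ C) (f : E × Z ≃ W) (π : Perm B) :
    blockPerm (blockProd e f) (blockPerm (Equiv.refl (B × E)) π) =
      blockPerm (Equiv.refl (C × W)) (blockPerm e π) := by
  refine perm_prod_ext e f fun b d x z ↦ ?_
  simp [blockPerm_blockProd_apply]

theorem conj_blockPerm_blockProd (e : B × D ≃ C) (f : E × Z ≃ W) (π : Perm B) (b : B) (κ : Perm W) :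
    MulAut.conj (blockPerm (blockProd e f) (blockPerm (Equiv.refl (B × E)) π))
        (fiberwise (block e b) κ) = fiberwise (block e (π b)) κ := by
  rw [blockPerm_blockProd_blockPerm, conj_fiberwise, blockPerm_image_block]

theorem exists_equiv_option_prod_nat {J X : Type*} [Countable X] {ι : J → X}
    (hι : Function.Injective ι) (hι' : ¬ Function.Surjective ι) :
    ∃ e : Option J × ℕ ≃ X × ℕ, ∀ j n, e (some j, n) = (ι j, n) := by
  classical
  have : Nonempty ↥(Set.range ι)ᶜ :=
    (Set.nonempty_compl.2 (mt Set.range_eq_univ.1 hι')).to_subtype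
  obtain ⟨r⟩ : Nonempty (ℕ ≃ ↥(Set.range ι)ᶜ × ℕ) := nonempty_equiv_of_countable
  let e : Option J × ℕ ≃ X × ℕ :=
    optionProdEquiv.trans <| (sumComm _ _).trans <|
      (sumCongr (prodCongr (ofInjective ι hι) (Equiv.refl ℕ)) r).trans <|
        (sumProdDistrib _ _ _).symm.trans (prodCongr (Set.sumCompl (Set.range ι)) (Equiv.refl ℕ))
  exact ⟨e, fun j n ↦ by simp [e]⟩

theorem exists_equiv_block_eq : ∃ e : Option Unit × ℕ ≃ Option Bool × ℕ,
    block e (some ()) = block (Equiv.refl (Option Bool × ℕ)) none ∧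
    block e none = block (Equiv.refl (Option Bool × ℕ)) (some true) ∪
      block (Equiv.refl (Option Bool × ℕ)) (some false) := by
  obtain ⟨e, he⟩ := exists_equiv_option_prod_nat (J := Unit) (X := Option Bool)
    (ι := fun _ ↦ none) (fun _ _ _ ↦ rfl) (fun h ↦ by simpa using h (some true))
  have hsome : block e (some ()) = block (Equiv.refl (Option Bool × ℕ)) none := by
    simp [block, he]
  refine ⟨e, hsome, Set.ext fun c ↦ ?_⟩
  have hcompl : c ∈ block e none ↔ c ∉ block e (some ()) := by
    rw [mem_block, mem_block]
    cases (e.symm c).1 <;> simp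
  rw [hcompl, hsome]
  obtain ⟨_ | _ | _, n⟩ := c <;> simp

end BlockPermutations

section Alternating

open Equiv

variable {B E : Type*} [Fintype B] [DecidableEq B] [Fintype E] [DecidableEq E]

theorem fiberwise_mem_alternatingGroup (P : Set B) {π : Perm E} (hπ : π ∈ alternatingGroup E) :
    fiberwise P π ∈ alternatingGroup (B × E) := by
  classical
  refine (Perm.sign_prodCongrRight fun b ↦ if b ∈ P then π else 1).trans
    (Finset.prod_eq_one fun b _ ↦ ?_)
  split_ifs
  exacts [hπ, Perm.sign_one]

theorem blockPerm_refl_mem_alternatingGroup (hE : Even (Fintype.card E)) (π : Perm B) :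
    blockPerm (Equiv.refl (B × E)) π ∈ alternatingGroup (B × E) := by
  have : blockPerm (Equiv.refl (B × E)) π = prodCongrLeft fun _ ↦ π := rfl
  obtain ⟨k, hk⟩ := hE
  rw [Perm.mem_alternatingGroup, this, Perm.sign_prodCongrLeft, Finset.prod_const, Finset.card_univ,
    hk, ← two_mul, pow_mul, Int.units_sq, one_pow]

end Alternating

section Model

open Equiv

variable {A : Type*} [Group A]

theorem exists_collapsesAt_of_conj_blockPerm {E W Z : Type*} [Fintype E] [DecidableEq E]
    [Nonempty Z] (hE : Even (Fintype.card E)) (f : E × Z ≃ W) (α : A →* Perm W) {g : A}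
    {κ κ' : alternatingGroup E} (hκ : κ ≠ κ')
    (hconj : MulAut.conj (α g) (blockPerm f κ) = blockPerm f κ') :
    ∃ (ρ : A →* Perm ((Option Bool × ℕ) × W))
      (σ : alternatingGroup (Option Unit × E) →* Perm ((Option Bool × ℕ) × W))
      (τ : alternatingGroup (Option Bool × E) →* Perm ((Option Bool × ℕ) × W)),
      ρ g ≠ 1 ∧ CollapsesAt g ρ σ τ := by
  obtain ⟨e₁, hsome, hnone⟩ := exists_equiv_block_eq
  set e₂ := Equiv.refl (Option Bool × ℕ)
  let ρ : A →* Perm ((Option Bool × ℕ) × W) := (fiberwise (block e₁ none)).comp α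
  let σ := (blockPerm (blockProd e₁ f)).comp (alternatingGroup (Option Unit × E)).subtype
  let τ := (blockPerm (blockProd e₂ f)).comp (alternatingGroup (Option Bool × E)).subtype
  refine ⟨ρ, σ, τ, ?_, ?_, ?_, ?_⟩
  · refine (map_ne_one_iff _ (fiberwise_injective (Set.range_nonempty _))).2 fun hαg ↦ hκ ?_
    rw [hαg, map_one, MulAut.one_apply] at hconj
    exact Subtype.ext (blockPerm_injective f hconj)
  · refine ⟨⟨_, fiberwise_mem_alternatingGroup {none} κ.2⟩,
      ⟨_, fiberwise_mem_alternatingGroup {none} κ'.2⟩, ?_, ?_⟩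
    · exact fun h ↦ hκ (Subtype.ext (fiberwise_injective (Set.singleton_nonempty none)
        (congrArg Subtype.val h)))
    · simp only [σ, ρ, MonoidHom.comp_apply, Subgroup.subtype_apply,
        blockPerm_blockProd_fiberwise]
      rw [← hconj, MulAut.conj_apply, MulAut.conj_apply, map_mul, map_mul, map_inv]
  · refine ⟨⟨_, fiberwise_mem_alternatingGroup {some ()} (κ / κ').2⟩,
      ⟨_, fiberwise_mem_alternatingGroup {none} (κ / κ').2⟩, ?_, ?_⟩
    · rw [Ne, Subgroup.mk_eq_one]
      refine (map_ne_one_iff (fiberwise {none})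
        (fiberwise_injective (Set.singleton_nonempty none))).2 ?_
      exact mt OneMemClass.coe_eq_one.1 (div_ne_one.2 hκ)
    · simp only [σ, τ, MonoidHom.comp_apply, Subgroup.subtype_apply,
        blockPerm_blockProd_fiberwise, hsome]
  · refine ⟨⟨_, blockPerm_refl_mem_alternatingGroup hE (swap none (some ()))⟩,
      ⟨_, blockPerm_refl_mem_alternatingGroup hE (swap none (some true))⟩,
      ⟨_, blockPerm_refl_mem_alternatingGroup hE (swap none (some false))⟩, fun a ↦ ?_⟩
    have hρ (b : Bool) : MulAut.conj
        (blockPerm (blockProd e₂ f) (blockPerm (Equiv.refl _) (swap none (some b))) *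
          blockPerm (blockProd e₁ f) (blockPerm (Equiv.refl _) (swap none (some ())))) (ρ a) =
        fiberwise (block e₂ (some b)) (α a) := by
      rw [map_mul, MulAut.mul_apply, MonoidHom.comp_apply, conj_blockPerm_blockProd,
        swap_apply_left, hsome, conj_blockPerm_blockProd, swap_apply_left]
    calc
      ρ a = fiberwise (block e₂ (some true)) (α a) * fiberwise (block e₂ (some false)) (α a) := by
        rw [← fiberwise_union (disjoint_block e₂ (by simp)), ← hnone, MonoidHom.comp_apply]
      _ = _ := congrArg₂ (· * ·) (hρ true).symm (hρ false).symm

theorem exists_conj_blockPerm [Countable A] {g : A} (hg : g ≠ 1) {K : Type*} [Fintype K]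
    [DecidableEq K] [Nontrivial (alternatingGroup K)] :
    ∃ (f : (Option Bool × K) × (ℕ × Unit) ≃ (Option A × ℕ) × K)
      (α : A →* Perm ((Option A × ℕ) × K)) (κ κ' : alternatingGroup (Option Bool × K)),
      κ ≠ κ' ∧ MulAut.conj (α g) (blockPerm f κ) = blockPerm f κ' := by
  obtain ⟨e, he⟩ := exists_equiv_option_prod_nat (J := Bool) (X := Option A)
    (ι := fun b ↦ some (cond b g 1)) (by simp [Function.Injective, hg, hg.symm])
      (fun h ↦ by simpa using h none)
  let α := (blockPerm (Equiv.refl ((Option A × ℕ) × K))).comp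
    ((blockPerm (Equiv.refl (Option A × ℕ))).comp (MulAction.toPermHom A (Option A)))
  obtain ⟨κ, hκ⟩ := exists_ne (1 : alternatingGroup K)
  refine ⟨blockProd e (prodPUnit K), α,
    ⟨_, fiberwise_mem_alternatingGroup {some false} κ.2⟩,
    ⟨_, fiberwise_mem_alternatingGroup {some true} κ.2⟩, ?_, ?_⟩
  · refine fun h ↦ hκ (Subtype.ext (Perm.ext fun k ↦ ?_))
    simpa [fiberwise_of_mem, fiberwise_of_notMem] using
      DFunLike.congr_fun (congrArg Subtype.val h) (some false, k)
  · have himage : blockPerm (Equiv.refl (Option A × ℕ)) (MulAction.toPermHom A (Option A) g) ''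
        block e (some false) = block e (some true) := by
      simp [block, ← Set.range_comp, Function.comp_def, he]
    rw [blockPerm_blockProd_fiberwise, blockPerm_blockProd_fiberwise, MonoidHom.comp_apply,
      conj_fiberwise, MonoidHom.comp_apply, himage]

theorem exists_isFinitelyPresented_normalClosure_eq_top {A : Type u} [Group A]
    [Group.IsFinitelyPresented A] {g : A} (hg : g ≠ 1) :
    ∃ (Q : Type u) (_ : Group Q) (φ : A →* Q), Group.IsFinitelyPresented Q ∧ φ g ≠ 1 ∧
      Subgroup.normalClosure {φ g} = ⊤ := by
  have := fg_of_isFinitelyPresented (G := A)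
  have := countable_of_fg (G := A)
  have : Nontrivial (alternatingGroup (Fin 4)) :=
    alternatingGroup.nontrivial_of_three_le_card (by simp)
  obtain ⟨f, α, κ, κ', hκ, hconj⟩ := exists_conj_blockPerm hg (K := Fin 4)
  obtain ⟨ρ, σ, τ, hρg, hcollapse⟩ := exists_collapsesAt_of_conj_blockPerm (by decide) f α hκ hconj
  have : IsSimpleGroup (alternatingGroup (Option Unit × Option Bool × Fin 4)) :=
    alternatingGroup.isSimpleGroup (by simp)
  have : IsSimpleGroup (alternatingGroup (Option Bool × Option Bool × Fin 4)) :=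
    alternatingGroup.isSimpleGroup (by simp)
  exact hcollapse.exists_isFinitelyPresented_normalClosure_eq_top hρg

end Model

theorem kervaire_of_finitelyPresented_general {N : Type*} [Group N] [Group.FG N]
    (h : ∀ (G : Type u) [Group G], Nontrivial G → IsFinitelyPresentedGroup G →
      ¬ ∃ w : Coprod G N, Subgroup.normalClosure ({w} : Set (Coprod G N)) = ⊤) :
    ∀ (G : Type u) [Group G], Nontrivial G →
      ¬ ∃ w : Coprod G N, Subgroup.normalClosure ({w} : Set (Coprod G N)) = ⊤ := by
  rintro G _ _ ⟨w, hw⟩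
  obtain ⟨A, _, ψ, W, _, hψ, hW⟩ := exists_isFinitelyPresented_range_inr_le (hw ▸ le_top)
  have hfst : Coprod.fst W ≠ 1 := ne_one_of_map (f := ψ) (hψ ▸ coprod_fst_ne_one hw)
  obtain ⟨H, _, φ, _, hφ, htop⟩ := exists_isFinitelyPresented_normalClosure_eq_top hfst
  refine h H (nontrivial_of_ne _ _ hφ) isFinitelyPresentedGroup_of_isFinitelyPresented
    ⟨Coprod.map φ (.id N) W, normalClosure_singleton_eq_top_of_fst ?_ ?_⟩
  · simpa only [Set.image_singleton] using range_inr_le_normalClosure_image φ hW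
  · rwa [coprod_fst_map_id]

/-- González-Acuña–Ramírez reduction: if the Kervaire conjecture holds for every
nontrivial finitely presented group, then it holds for every nontrivial group. -/
theorem kervaire_of_finitelyPresented
    (h : ∀ (G : Type u) [Group G], Nontrivial G → IsFinitelyPresentedGroup G →
      ¬ ∃ w : Coprod G (Multiplicative ℤ),
        Subgroup.normalClosure ({w} : Set (Coprod G (Multiplicative ℤ))) = ⊤) :
    ∀ (G : Type u) [Group G], Nontrivial G →
      ¬ ∃ w : Coprod G (Multiplicative ℤ),
        Subgroup.normalClosure ({w} : Set (Coprod G (Multiplicative ℤ))) = ⊤ :=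
  kervaire_of_finitelyPresented_general h
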